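/- (Period of the holomorphic two-form as Appell's F₂) Let β₁, β₂ be real numbers with β₁ > 0, 0 < β₂ < 1 and β₁ + β₂ > 1/2, set α = β₁ + β₂ − 1/2, and let A, B be real numbers with A > B > 1. For u > 1 let z(u) = 2u − 1 − 2√(u² − u), which lies in (0, 1) and satisfies u = (1+z(u))²/(4z(u)). Then the iterated integral ∫_B^A (A−u)^{β₂−1} (u−B)^{β₂−1} ( ∫₀^{z(u)} x^{β₁+β₂−3/2} (x² + 2(1−2u)x + 1)^{−β₂} dx ) du = Γ(α) Γ(1−β₂) Γ(β₂)² / (4^{α} Γ(β₁+1/2) Γ(2β₂)) · A^{−α} (A−B)^{2β₂−1} · F₂(α; β₁, β₂; 2β₁, 2β₂; 1/A, 1 − B/A). -/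

import Mathlib

open MeasureTheory

/-- Pochhammer symbol `(x)_n` in `ℝ`. -/
noncomputable def rpoch (x : ℝ) (n : ℕ) : ℝ := (ascPochhammer ℝ n).eval x

/-- Appell's hypergeometric series `F₂` (real). -/
noncomputable def appellF2 (a b₁ b₂ c₁ c₂ z₁ z₂ : ℝ) : ℝ :=
  ∑' p : ℕ × ℕ, rpoch a (p.1 + p.2) * rpoch b₁ p.1 * rpoch b₂ p.2 /
    (rpoch c₁ p.1 * rpoch c₂ p.2 * (p.1.factorial : ℝ) * (p.2.factorial : ℝ)) *
    z₁ ^ p.1 * z₂ ^ p.2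

/-- The inverse of the degree-two base change `u = (1+z)²/(4z)`, selecting the
branch `z(u) ∈ (0,1)` for `u > 1`. -/
noncomputable def zOf (u : ℝ) : ℝ := 2 * u - 1 - 2 * Real.sqrt (u ^ 2 - u)

/-! Write `κ x = 4x / (1 + x)²`, so that `κ (zOf u) = 1 / u`. The substitution `t = u κ x` turns the
inner integral into a Beta-type integral on `(0, 1)`, because
`1 - u κ x = (x² + 2 (1 - 2u) x + 1) / (1 + x)²`. The remaining factor is `(1 + x)^(2β₁) / (1 - x)`,
which is a `₂F₁` at `κ x` by a quadratic transformation, and the Beta moments exchange one of its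
parameters, leaving `u^(-α) ₂F₁(α, β₁; 2β₁; 1 / u)`. Integrated against the Beta kernel in `u`, the
product of the series of `₂F₁` with the binomial series of `u^(-α - m)` is the double series `F₂`.

The quadratic transformation is the generating function of the binomial coefficients
`choose (r + 2m) m`: these are Cauchy integrals of `(1 + w)^(r + 2m) / w^(m + 1)`, and summing the
geometric series under the contour integral leaves one residue. -/

section Pochhammer

@[simp]
lemma rpoch_zero (x : ℝ) : rpoch x 0 = 1 := by simp [rpoch]

lemma rpoch_succ (x : ℝ) (n : ℕ) : rpoch x (n + 1) = rpoch x n * (x + n) :=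
  ascPochhammer_succ_eval n x

lemma rpoch_add (x : ℝ) (m n : ℕ) : rpoch x (m + n) = rpoch x m * rpoch (x + m) n := by
  simp [rpoch, ← ascPochhammer_mul, Polynomial.eval_comp]

lemma rpoch_pos {x : ℝ} (hx : 0 < x) (n : ℕ) : 0 < rpoch x n := ascPochhammer_pos n x hx

lemma rpoch_ne_zero {x : ℝ} (hx : ∀ k : ℕ, x ≠ -k) (n : ℕ) : rpoch x n ≠ 0 := by
  rw [rpoch, Ne, ascPochhammer_eval_eq_zero_iff]
  rintro ⟨k, -, hk⟩
  exact hx k (by rw [hk, neg_neg])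

lemma abs_rpoch_le_rpoch {x y : ℝ} (hxy : |x| ≤ y) (n : ℕ) : |rpoch x n| ≤ rpoch y n := by
  induction n with
  | zero => simp
  | succ n ih =>
    rw [rpoch_succ, rpoch_succ, abs_mul]
    have hlast : |x + n| ≤ y + n := (abs_add_le x n).trans (by simpa using hxy)
    gcongr
    exact (abs_nonneg _).trans ih

lemma rpoch_two_mul (x : ℝ) (n : ℕ) :
    rpoch (2 * x) (2 * n) = 4 ^ n * rpoch x n * rpoch (x + 1 / 2) n := by
  induction n with
  | zero => simp
  | succ n ih =>
    rw [show 2 * (n + 1) = 2 * n + 1 + 1 by ring]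
    simp only [rpoch_succ, ih]
    push_cast
    ring

lemma Gamma_add_natCast_eq_rpoch_mul {x : ℝ} (hx : ∀ k : ℕ, x ≠ -k) (n : ℕ) :
    Real.Gamma (x + n) = rpoch x n * Real.Gamma x := by
  induction n with
  | zero => simp
  | succ n ih =>
    have hxn : x + n ≠ 0 := fun h => hx n (eq_neg_of_add_eq_zero_left h)
    rw [Nat.cast_succ, ← add_assoc, Real.Gamma_add_one hxn, ih, rpoch_succ]
    ring

lemma ringChoose_add_sub_one_eq_rpoch_div (x : ℝ) (n : ℕ) :
    Ring.choose (x + n - 1) n = rpoch x n / n.factorial := by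
  rw [← Ring.multichoose_eq, eq_div_iff (by positivity), mul_comm, ← nsmul_eq_mul,
    Ring.factorial_nsmul_multichoose_eq_ascPochhammer, Polynomial.ascPochhammer_smeval_eq_eval,
    rpoch]

lemma hasSum_rpoch_div_factorial_mul_pow (a : ℝ) {x : ℝ} (hx : |x| < 1) :
    HasSum (fun n : ℕ => rpoch a n / n.factorial * x ^ n) ((1 - x) ^ (-a)) := by
  have hball : x ∈ Metric.eball (0 : ℝ) 1 := by
    simpa [enorm_eq_nnnorm, ← NNReal.coe_lt_coe] using hx
  have hsum := (Real.one_div_one_sub_rpow_hasFPowerSeriesOnBall_zero a).hasSum hball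
  simp only [zero_add, FormalMultilinearSeries.ofScalars_apply_eq, smul_eq_mul,
    ringChoose_add_sub_one_eq_rpoch_div] at hsum
  rwa [Real.rpow_neg (by linarith [(abs_lt.1 hx).2]), ← one_div]

end Pochhammer

section Hypergeometric

lemma ordinaryHypergeometricCoefficient_eq_rpoch (a b c : ℝ) (n : ℕ) :
    ordinaryHypergeometricCoefficient a b c n =
      rpoch a n * rpoch b n / (rpoch c n * n.factorial) := by
  unfold ordinaryHypergeometricCoefficient rpoch
  field_simp

lemma one_le_radius_ordinaryHypergeometricSeries (a b c : ℝ) :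
    1 ≤ (ordinaryHypergeometricSeries ℝ a b c).radius := by
  by_cases habc : ∀ k : ℕ, ↑k ≠ -a ∧ ↑k ≠ -b ∧ ↑k ≠ -c
  · exact (ordinaryHypergeometricSeries_radius_eq_one ℝ a b c habc).ge
  · have htop : (ordinaryHypergeometricSeries ℝ a b c).radius = ⊤ := by
      push Not at habc
      obtain ⟨k, hk⟩ := habc
      by_cases ha : (k : ℝ) = -a
      · rw [← neg_eq_iff_eq_neg.2 ha]
        exact ordinaryHypergeometric_radius_top_of_neg_nat₁ ℝ b c
      by_cases hb : (k : ℝ) = -b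
      · rw [← neg_eq_iff_eq_neg.2 hb]
        exact ordinaryHypergeometric_radius_top_of_neg_nat₂ ℝ a c
      · rw [← neg_eq_iff_eq_neg.2 (hk ha hb)]
        exact ordinaryHypergeometric_radius_top_of_neg_nat₃ ℝ a b
    exact htop ▸ le_top

lemma hasSum_ordinaryHypergeometric (a b c : ℝ) {x : ℝ} (hx : |x| < 1) :
    HasSum (fun n => ordinaryHypergeometricCoefficient a b c n * x ^ n) (₂F₁ a b c x) := by
  have hball : x ∈ Metric.eball (0 : ℝ) (ordinaryHypergeometricSeries ℝ a b c).radius := by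
    refine Metric.eball_subset_eball (one_le_radius_ordinaryHypergeometricSeries a b c) ?_
    simpa [enorm_eq_nnnorm, ← NNReal.coe_lt_coe] using hx
  refine ((ordinaryHypergeometricSeries ℝ a b c).hasSum hball).congr_fun fun n => ?_
  rw [ordinaryHypergeometricSeries_apply_eq, smul_eq_mul]

lemma hasSum_mul_rpoch_add_div_factorial_mul_pow (a k x : ℝ) {y : ℝ} (hy : |y| < 1) (m : ℕ) :
    HasSum (fun n : ℕ => k * x ^ m * (rpoch (a + m) n / n.factorial * y ^ n))
      ((1 - y) ^ (-a) * (k * (x / (1 - y)) ^ m)) := by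
  have hy' : 0 < 1 - y := by linarith [(abs_lt.1 hy).2]
  convert! (hasSum_rpoch_div_factorial_mul_pow (a + m) hy).mul_left (k * x ^ m) using 1
  rw [neg_add, Real.rpow_add hy', Real.rpow_neg hy'.le (m : ℝ), Real.rpow_natCast, div_pow]
  ring

lemma abs_ordinaryHypergeometricCoefficient_le (a b c : ℝ) (n : ℕ) :
    |ordinaryHypergeometricCoefficient a b c n| ≤
      |ordinaryHypergeometricCoefficient |a| b c n| := by
  have hrpoch : |rpoch a n| ≤ |rpoch (|a|) n| :=
    (abs_rpoch_le_rpoch le_rfl n).trans (le_abs_self _)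
  simp only [ordinaryHypergeometricCoefficient_eq_rpoch, abs_div, abs_mul]
  exact div_le_div_of_nonneg_right (mul_le_mul_of_nonneg_right hrpoch (abs_nonneg _))
    (by positivity)

lemma summable_ordinaryHypergeometricCoefficient_mul_rpoch (a b c : ℝ) {x y : ℝ}
    (hxy : |x| + |y| < 1) :
    Summable fun p : ℕ × ℕ => ordinaryHypergeometricCoefficient a b c p.1 * x ^ p.1 *
      (rpoch (a + p.1) p.2 / p.2.factorial * y ^ p.2) := by
  have hy : |(|y|)| < 1 := by rw [abs_abs]; linarith [abs_nonneg x]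
  have hratio_nonneg : 0 ≤ |x| / (1 - |y|) := div_nonneg (abs_nonneg x) (by linarith [abs_nonneg x])
  have hratio : |(|x| / (1 - |y|))| < 1 := by
    rw [abs_of_nonneg hratio_nonneg, div_lt_one (by linarith [abs_nonneg x])]
    linarith
  have hrpoch (p : ℕ × ℕ) : |rpoch (a + p.1) p.2| ≤ rpoch (|a| + p.1) p.2 :=
    abs_rpoch_le_rpoch ((abs_add_le _ _).trans_eq (by rw [Nat.abs_cast])) _
  let majorant (p : ℕ × ℕ) : ℝ := |ordinaryHypergeometricCoefficient |a| b c p.1| * |x| ^ p.1 *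
    (rpoch (|a| + p.1) p.2 / p.2.factorial * |y| ^ p.2)
  have hmajorant_nonneg : 0 ≤ majorant := fun p => by
    have := (abs_nonneg _).trans (hrpoch p)
    positivity
  have hfiber (m : ℕ) := hasSum_mul_rpoch_add_div_factorial_mul_pow |a|
    |ordinaryHypergeometricCoefficient |a| b c m| |x| hy m
  have hmajorant : Summable majorant := by
    refine (summable_prod_of_nonneg hmajorant_nonneg).2 ⟨fun m => (hfiber m).summable, ?_⟩
    simp only [majorant, (hfiber _).tsum_eq]
    refine Summable.mul_left _ ((hasSum_ordinaryHypergeometric |a| b c hratio).summable.abs.congr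
      fun m => ?_)
    rw [abs_mul, abs_pow, abs_of_nonneg hratio_nonneg]
  refine hmajorant.of_norm_bounded fun p => ?_
  rw [Real.norm_eq_abs, abs_mul, abs_mul _ (x ^ p.1), abs_mul _ (y ^ p.2), abs_div, abs_pow,
    abs_pow, Nat.abs_cast]
  refine mul_le_mul ?_ ?_ (by positivity) (by positivity)
  · exact mul_le_mul_of_nonneg_right (abs_ordinaryHypergeometricCoefficient_le a b c p.1)
      (by positivity)
  · gcongr
    exact hrpoch p

/-- Summing over the second index first leaves `(1 - y)^(-a - m)` in the `m`-th term. -/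
lemma hasSum_prod_ordinaryHypergeometricCoefficient (a b c : ℝ) {x y : ℝ} (hxy : |x| + |y| < 1) :
    HasSum (fun p : ℕ × ℕ => ordinaryHypergeometricCoefficient a b c p.1 * x ^ p.1 *
        (rpoch (a + p.1) p.2 / p.2.factorial * y ^ p.2))
      ((1 - y) ^ (-a) * ₂F₁ a b c (x / (1 - y))) := by
  have hy : |y| < 1 := by linarith [abs_nonneg x]
  have hy' : 0 < 1 - y := by linarith [(abs_lt.1 hy).2]
  have hratio : |x / (1 - y)| < 1 := by
    rw [abs_div, abs_of_pos hy', div_lt_one hy']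
    linarith [le_abs_self y]
  have hsum := (summable_ordinaryHypergeometricCoefficient_mul_rpoch a b c hxy).hasSum
  have hfiber := hsum.prod_fiberwise
    (fun m => hasSum_mul_rpoch_add_div_factorial_mul_pow a _ x hy m)
  rwa [hfiber.unique ((hasSum_ordinaryHypergeometric a b c hratio).mul_left _)] at hsum

end Hypergeometric

section BetaIntegral

open ProbabilityTheory (beta)

lemma ofReal_rpow_mul_one_sub_rpow (a b : ℝ) {s : ℝ} (hs : s ∈ Set.Ioo (0 : ℝ) 1) :
    ((s ^ (a - 1) * (1 - s) ^ (b - 1) : ℝ) : ℂ) =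
      (s : ℂ) ^ ((a : ℂ) - 1) * (1 - (s : ℂ)) ^ ((b : ℂ) - 1) := by
  push_cast [Complex.ofReal_cpow hs.1.le, Complex.ofReal_cpow (sub_pos.2 hs.2).le]
  rfl

lemma integrableOn_rpow_mul_one_sub_rpow {a b : ℝ} (ha : 0 < a) (hb : 0 < b) :
    IntegrableOn (fun s : ℝ => s ^ (a - 1) * (1 - s) ^ (b - 1)) (Set.Ioo 0 1) := by
  have hcomplex := Complex.betaIntegral_convergent (u := a) (v := b) (by simpa) (by simpa)
  rw [intervalIntegrable_iff_integrableOn_Ioo_of_le zero_le_one] at hcomplex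
  exact (hcomplex.congr_fun (fun s hs => (ofReal_rpow_mul_one_sub_rpow a b hs).symm)
    measurableSet_Ioo).re

lemma integral_rpow_mul_one_sub_rpow {a b : ℝ} (ha : 0 < a) (hb : 0 < b) :
    ∫ s in Set.Ioo (0 : ℝ) 1, s ^ (a - 1) * (1 - s) ^ (b - 1) = beta a b := by
  rw [ProbabilityTheory.beta_eq_betaIntegralReal a b ha hb, Complex.betaIntegral,
    intervalIntegral.integral_of_le zero_le_one, integral_Ioc_eq_integral_Ioo,
    ← setIntegral_congr_fun measurableSet_Ioo fun s hs => ofReal_rpow_mul_one_sub_rpow a b hs,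
    integral_complex_ofReal, Complex.ofReal_re]

lemma beta_add_natCast {a b : ℝ} (ha : 0 < a) (hb : 0 < b) (n : ℕ) :
    beta (a + n) b = beta a b * (rpoch a n / rpoch (a + b) n) := by
  have hne {x : ℝ} (hx : 0 < x) (k : ℕ) : x ≠ -k := by
    have := k.cast_nonneg (α := ℝ)
    linarith
  rw [beta, beta, add_right_comm, Gamma_add_natCast_eq_rpoch_mul (hne ha),
    Gamma_add_natCast_eq_rpoch_mul (hne (add_pos ha hb))]
  ring

lemma integral_rpow_mul_one_sub_rpow_mul_pow {a b : ℝ} (ha : 0 < a) (hb : 0 < b) (n : ℕ) :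
    ∫ s in Set.Ioo (0 : ℝ) 1, s ^ (a - 1) * (1 - s) ^ (b - 1) * s ^ n =
      beta a b * (rpoch a n / rpoch (a + b) n) := by
  rw [← beta_add_natCast ha hb, ← integral_rpow_mul_one_sub_rpow (by positivity) hb]
  refine setIntegral_congr_fun measurableSet_Ioo fun s hs => ?_
  rw [add_sub_right_comm, Real.rpow_add hs.1, Real.rpow_natCast]
  ring

lemma hasSum_integral_rpow_mul_one_sub_rpow_mul {ι : Type*} [Countable ι] {a b : ℝ} (ha : 0 < a)
    (hb : 0 < b) {k : ι → ℝ} (hk : Summable k) (n : ι → ℕ) {f : ℝ → ℝ}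
    (hf : ∀ s ∈ Set.Ioo (0 : ℝ) 1, HasSum (fun i => k i * s ^ n i) (f s)) :
    HasSum (fun i => beta a b * (k i * (rpoch a (n i) / rpoch (a + b) (n i))))
      (∫ s in Set.Ioo (0 : ℝ) 1, s ^ (a - 1) * (1 - s) ^ (b - 1) * f s) := by
  have hmoment (i : ι) : ∫ s in Set.Ioo (0 : ℝ) 1,
      s ^ (a - 1) * (1 - s) ^ (b - 1) * (k i * s ^ n i) =
        beta a b * (k i * (rpoch a (n i) / rpoch (a + b) (n i))) := by
    simp_rw [mul_left_comm _ (k i)]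
    rw [integral_const_mul, integral_rpow_mul_one_sub_rpow_mul_pow ha hb]
  simp_rw [← hmoment]
  refine hasSum_integral_of_dominated_convergence
    (fun i s => s ^ (a - 1) * (1 - s) ^ (b - 1) * |k i|) (fun i => ?_) (fun i => ?_)
    (.of_forall fun s => hk.abs.mul_left _) ?_ ?_
  · exact (by fun_prop : Measurable _).aestronglyMeasurable
  · filter_upwards [ae_restrict_mem measurableSet_Ioo] with s hs
    have hs0 : 0 ≤ s := hs.1.le
    have hs1 : 0 ≤ 1 - s := (sub_pos.2 hs.2).le
    rw [norm_mul, Real.norm_of_nonneg (by positivity), Real.norm_eq_abs, abs_mul,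
      abs_of_nonneg (pow_nonneg hs0 _)]
    gcongr
    exact mul_le_of_le_one_right (abs_nonneg _) (pow_le_one₀ hs0 hs.2.le)
  · simp only [tsum_mul_left]
    exact (integrableOn_rpow_mul_one_sub_rpow ha hb).mul_const _
  · filter_upwards [ae_restrict_mem measurableSet_Ioo] with s hs
    exact (hf s hs).mul_left _

/-- Bateman's integral: the Beta moments `(a)_n / (a + b)_n` replace one numerator parameter. -/
theorem integral_rpow_mul_one_sub_rpow_mul_ordinaryHypergeometric {a b : ℝ} (ha : 0 < a)
    (hb : 0 < b) (q c : ℝ) {x : ℝ} (hx : |x| < 1) :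
    ∫ s in Set.Ioo (0 : ℝ) 1, s ^ (a - 1) * (1 - s) ^ (b - 1) * ₂F₁ (a + b) q c (x * s) =
      beta a b * ₂F₁ a q c x := by
  have hseries (s : ℝ) (hs : s ∈ Set.Ioo (0 : ℝ) 1) :
      HasSum (fun n => ordinaryHypergeometricCoefficient (a + b) q c n * x ^ n * s ^ n)
        (₂F₁ (a + b) q c (x * s)) := by
    have hxs : |x * s| < 1 := by
      rw [abs_mul, abs_of_pos hs.1]
      exact mul_lt_one_of_nonneg_of_lt_one_left (abs_nonneg x) hx hs.2.le
    simpa only [mul_pow, mul_assoc] using hasSum_ordinaryHypergeometric (a + b) q c hxs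
  refine (hasSum_integral_rpow_mul_one_sub_rpow_mul ha hb
    (hasSum_ordinaryHypergeometric (a + b) q c hx).summable id hseries).unique ?_
  refine ((hasSum_ordinaryHypergeometric a q c hx).mul_left _).congr_fun fun n => ?_
  have hne := (rpoch_pos (add_pos ha hb) n).ne'
  simp only [ordinaryHypergeometricCoefficient_eq_rpoch, id]
  field_simp

theorem integral_rpow_mul_one_sub_rpow_mul_ordinaryHypergeometric_div {a b : ℝ} (ha : 0 < a)
    (hb : 0 < b) (p q c : ℝ) {x y : ℝ} (hxy : |x| + |y| < 1) :
    ∫ s in Set.Ioo (0 : ℝ) 1, s ^ (a - 1) * (1 - s) ^ (b - 1) *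
        ((1 - y * s) ^ (-p) * ₂F₁ p q c (x / (1 - y * s))) =
      beta a b * appellF2 p q a c (a + b) x y := by
  have hseries (s : ℝ) (hs : s ∈ Set.Ioo (0 : ℝ) 1) :
      HasSum (fun i : ℕ × ℕ => ordinaryHypergeometricCoefficient p q c i.1 * x ^ i.1 *
          (rpoch (p + i.1) i.2 / i.2.factorial * y ^ i.2) * s ^ i.2)
        ((1 - y * s) ^ (-p) * ₂F₁ p q c (x / (1 - y * s))) := by
    have hys : |x| + |y * s| < 1 := by
      rw [abs_mul, abs_of_pos hs.1]
      linarith [mul_le_of_le_one_right (abs_nonneg y) hs.2.le]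
    simpa only [mul_pow, mul_assoc] using hasSum_prod_ordinaryHypergeometricCoefficient p q c hys
  rw [← (hasSum_integral_rpow_mul_one_sub_rpow_mul ha hb
    (hasSum_prod_ordinaryHypergeometricCoefficient p q c hxy).summable Prod.snd hseries).tsum_eq,
    tsum_mul_left, appellF2]
  congr 1
  refine tsum_congr fun i => ?_
  rw [rpoch_add, ordinaryHypergeometricCoefficient_eq_rpoch]
  field_simp

lemma integral_Ioo_sub_rpow_mul_sub_rpow_mul (a b : ℝ) {A B : ℝ} (hBA : B < A) (f : ℝ → ℝ) :
    ∫ u in Set.Ioo B A, (A - u) ^ (a - 1) * (u - B) ^ (b - 1) * f u =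
      (A - B) ^ (a + b - 1) *
        ∫ s in Set.Ioo (0 : ℝ) 1, s ^ (a - 1) * (1 - s) ^ (b - 1) * f (A - (A - B) * s) := by
  have hAB : 0 < A - B := sub_pos.2 hBA
  have hchange := intervalIntegral.integral_comp_sub_mul (a := 0) (b := 1)
    (fun u => (A - u) ^ (a - 1) * (u - B) ^ (b - 1) * f u) hAB.ne' A
  rw [mul_one, sub_sub_cancel, mul_zero, sub_zero, eq_inv_smul_iff₀ hAB.ne', smul_eq_mul,
    intervalIntegral.integral_of_le zero_le_one, intervalIntegral.integral_of_le hBA.le,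
    integral_Ioc_eq_integral_Ioo, integral_Ioc_eq_integral_Ioo] at hchange
  rw [← hchange, ← integral_const_mul, ← integral_const_mul]
  refine setIntegral_congr_fun measurableSet_Ioo fun s hs => ?_
  rw [show A - (A - (A - B) * s) = (A - B) * s by ring,
    show A - (A - B) * s - B = (A - B) * (1 - s) by ring, Real.mul_rpow hAB.le hs.1.le,
    Real.mul_rpow hAB.le (sub_pos.2 hs.2).le,
    show a + b - 1 = 1 + (a - 1) + (b - 1) by ring, Real.rpow_add hAB, Real.rpow_add hAB,
    Real.rpow_one]
  ring

theorem integral_Ioo_sub_rpow_mul_sub_rpow_mul_ordinaryHypergeometric_inv {a b : ℝ} (ha : 0 < a)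
    (hb : 0 < b) (p q c : ℝ) {A B : ℝ} (hB : 1 < B) (hBA : B < A) :
    ∫ u in Set.Ioo B A, (A - u) ^ (a - 1) * (u - B) ^ (b - 1) * (u ^ (-p) * ₂F₁ p q c u⁻¹) =
      beta a b * (A ^ (-p) * (A - B) ^ (a + b - 1)) *
        appellF2 p q a c (a + b) A⁻¹ (1 - B / A) := by
  have hA : 0 < A := by linarith
  have hy : 0 < 1 - B / A := sub_pos.2 ((div_lt_one hA).2 hBA)
  have hconv : |A⁻¹| + |1 - B / A| < 1 := by
    rw [abs_of_pos (inv_pos.2 hA), abs_of_pos hy, ← one_div]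
    linarith [div_lt_div_of_pos_right hB hA]
  have hscale : ∫ s in Set.Ioo (0 : ℝ) 1, s ^ (a - 1) * (1 - s) ^ (b - 1) *
        ((A - (A - B) * s) ^ (-p) * ₂F₁ p q c (A - (A - B) * s)⁻¹) =
      A ^ (-p) * ∫ s in Set.Ioo (0 : ℝ) 1, s ^ (a - 1) * (1 - s) ^ (b - 1) *
        ((1 - (1 - B / A) * s) ^ (-p) * ₂F₁ p q c (A⁻¹ / (1 - (1 - B / A) * s))) := by
    rw [← integral_const_mul]
    refine setIntegral_congr_fun measurableSet_Ioo fun s hs => ?_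
    have hys : 0 < 1 - (1 - B / A) * s := by
      have := mul_lt_of_lt_one_right hy hs.2
      have : 0 < B / A := by positivity
      linarith
    have hu : A - (A - B) * s = A * (1 - (1 - B / A) * s) := by
      field_simp
    simp only [hu, Real.mul_rpow hA.le hys.le, mul_inv, ← div_eq_mul_inv]
    ring
  rw [integral_Ioo_sub_rpow_mul_sub_rpow_mul a b hBA, hscale,
    integral_rpow_mul_one_sub_rpow_mul_ordinaryHypergeometric_div ha hb p q c hconv]
  ring

end BetaIntegral

section QuadraticTransformation

lemma hasSum_circleIntegral_pow_mul {c : ℂ} {R : ℝ} (hR : 0 ≤ R) {h g : ℂ → ℂ}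
    (hh : ContinuousOn h (Metric.sphere c R)) (hg : ContinuousOn g (Metric.sphere c R))
    (hh_lt : ∀ w ∈ Metric.sphere c R, ‖h w‖ < 1) :
    HasSum (fun m : ℕ => ∮ w in C(c, R), h w ^ m * g w) (∮ w in C(c, R), g w / (1 - h w)) := by
  have hmem (θ : ℝ) : circleMap c R θ ∈ Metric.sphere c R := circleMap_mem_sphere c hR θ
  obtain ⟨w₀, hw₀, hmax⟩ := (isCompact_sphere c R).exists_isMaxOn ⟨_, hmem 0⟩ hh.norm
  have hhc : Continuous fun θ => h (circleMap c R θ) :=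
    hh.comp_continuous (continuous_circleMap c R) hmem
  have hgc : Continuous fun θ => g (circleMap c R θ) :=
    hg.comp_continuous (continuous_circleMap c R) hmem
  have hd : Continuous (deriv (circleMap c R)) := by
    simp only [funext (deriv_circleMap c R)]
    fun_prop
  refine intervalIntegral.hasSum_integral_of_dominated_convergence
    (fun m θ => ‖h w₀‖ ^ m * ‖deriv (circleMap c R) θ * g (circleMap c R θ)‖)
    (fun m => ?_) (fun m => ?_) ?_ ?_ ?_
  · exact (hd.smul ((hhc.pow m).mul hgc)).aestronglyMeasurable
  · refine .of_forall fun θ _ => ?_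
    rw [smul_eq_mul, mul_left_comm, norm_mul, norm_pow]
    gcongr
    exact hmax (hmem θ)
  · exact .of_forall fun θ _ =>
      (summable_geometric_of_lt_one (norm_nonneg _) (hh_lt w₀ hw₀)).mul_right _
  · simp only [tsum_mul_right]
    exact (continuous_const.mul (hd.mul hgc).norm).intervalIntegrable _ _
  · refine .of_forall fun θ _ => HasSum.const_smul _ ?_
    simp only [div_eq_inv_mul]
    exact (hasSum_geometric_of_norm_lt_one (hh_lt _ (hmem θ))).mul_right _

lemma differentiableOn_one_add_cpow (a : ℂ) :
    DifferentiableOn ℂ (fun w : ℂ => (1 + w) ^ a) (Metric.ball 0 1) := fun w hw => by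
  have hslit : 1 + w ∈ Complex.slitPlane :=
    Complex.mem_slitPlane_of_norm_lt_one (mem_ball_zero_iff.1 hw)
  exact ((differentiableAt_id.const_add 1).cpow_const hslit).differentiableWithinAt

lemma two_pi_I_inv_smul_circleIntegral_one_add_cpow_div_pow (a : ℂ) (n : ℕ) {R : ℝ} (hR : 0 < R)
    (hR1 : R < 1) :
    (2 * Real.pi * Complex.I : ℂ)⁻¹ • (∮ w in C(0, R), (1 + w) ^ a / w ^ (n + 1)) =
      Ring.choose a n := by
  lift R to NNReal using hR.le
  have hcauchy := (((differentiableOn_one_add_cpow a).mono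
    (Metric.closedBall_subset_ball hR1)).hasFPowerSeriesOnBall
      (by exact_mod_cast hR)).hasFPowerSeriesAt
  have hcoeff := cauchyPowerSeries_apply (fun w : ℂ => (1 + w) ^ a) 0 R n 1
  rw [← (Complex.one_add_cpow_hasFPowerSeriesAt_zero (a := a)).eq_formalMultilinearSeries hcauchy,
    binomialSeries, FormalMultilinearSeries.ofScalars_apply_eq, one_pow, smul_eq_mul,
    mul_one] at hcoeff
  rw [hcoeff]
  congr 2 with w
  simp only [sub_zero, smul_eq_mul]
  ring

lemma one_sub_div_one_add_sq_mul {K : Type*} [Field K] {x w : K} (hx : 1 + x ≠ 0) (hw : w ≠ 0) :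
    1 - x / (1 + x) ^ 2 * ((1 + w) ^ 2 / w) = (w - x) * (1 - x * w) / ((1 + x) ^ 2 * w) := by
  field_simp
  ring

lemma one_sub_mul_ne_zero_of_norm_lt_one {z w : ℂ} (hz : ‖z‖ < 1) (hw : ‖w‖ ≤ 1) :
    1 - z * w ≠ 0 := fun h => by
  have hlt : ‖z * w‖ < 1 := by
    rw [norm_mul]
    exact mul_lt_one_of_nonneg_of_lt_one_left (norm_nonneg z) hz hw
  rw [← sub_eq_zero.1 h, norm_one] at hlt
  exact hlt.false

lemma norm_div_one_add_sq_mul_lt_one {x : ℝ} (hx : 0 ≤ x) {w : ℂ} (hxw : x < ‖w‖) (hw : ‖w‖ < 1) :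
    ‖(x : ℂ) / (1 + x) ^ 2 * ((1 + w) ^ 2 / w)‖ < 1 := by
  have hw0 : 0 < ‖w‖ := hx.trans_lt hxw
  have hnum : ‖1 + w‖ ≤ 1 + ‖w‖ := (norm_add_le _ _).trans_eq (by rw [norm_one])
  have hdenom : ‖(1 : ℂ) + x‖ = 1 + x := by
    rw [← Complex.ofReal_one, ← Complex.ofReal_add, Complex.norm_of_nonneg (by positivity)]
  have hreal : 0 < 1 - x / (1 + x) ^ 2 * ((1 + ‖w‖) ^ 2 / ‖w‖) := by
    have : 0 < 1 - x * ‖w‖ :=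
      sub_pos.2 (mul_lt_one_of_nonneg_of_lt_one_left hx (hxw.trans hw) hw.le)
    have := sub_pos.2 hxw
    rw [one_sub_div_one_add_sq_mul (by positivity) hw0.ne']
    positivity
  calc ‖(x : ℂ) / (1 + x) ^ 2 * ((1 + w) ^ 2 / w)‖
      = x / (1 + x) ^ 2 * (‖1 + w‖ ^ 2 / ‖w‖) := by
        rw [norm_mul, norm_div, norm_div, norm_pow, norm_pow, hdenom, Complex.norm_of_nonneg hx]
    _ ≤ x / (1 + x) ^ 2 * ((1 + ‖w‖) ^ 2 / ‖w‖) := by gcongr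
    _ < 1 := sub_pos.1 hreal

lemma two_pi_I_inv_smul_circleIntegral_pow_mul (r z : ℂ) (m : ℕ) {R : ℝ} (hR : 0 < R)
    (hR1 : R < 1) :
    (2 * Real.pi * Complex.I : ℂ)⁻¹ •
        (∮ w in C(0, R), (z * ((1 + w) ^ 2 / w)) ^ m * ((1 + w) ^ r / w)) =
      Ring.choose (r + 2 * m) m * z ^ m := by
  rw [← two_pi_I_inv_smul_circleIntegral_one_add_cpow_div_pow _ m hR hR1, smul_mul_assoc,
    mul_comm _ (z ^ m), ← circleIntegral.integral_const_mul]
  congr 1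
  refine circleIntegral.integral_congr hR.le fun w hw => ?_
  have hw1 : 1 + w ≠ 0 := Complex.slitPlane_ne_zero (Complex.mem_slitPlane_of_norm_lt_one
    (by rwa [mem_sphere_zero_iff_norm.1 hw]))
  have hpow : (1 + w) ^ (r + 2 * m) = (1 + w) ^ r * ((1 + w) ^ 2) ^ m := by
    rw [Complex.cpow_add _ _ hw1, ← pow_mul, ← Complex.cpow_natCast _ (2 * m)]
    push_cast
    rfl
  simp only [hpow, mul_pow, div_pow]
  ring

/-- For `z = x / (1 + x)²` the poles of the integrand are `x` and `1 / x`, the two solutions of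
`z (1 + w)² = w`; only `x` lies inside the circle. -/
lemma two_pi_I_inv_smul_circleIntegral_div_one_sub (r : ℂ) {x R : ℝ} (hx : 0 ≤ x) (hxR : x < R)
    (hR1 : R < 1) :
    (2 * Real.pi * Complex.I : ℂ)⁻¹ • (∮ w in C(0, R),
        (1 + w) ^ r / w / (1 - (x : ℂ) / (1 + x) ^ 2 * ((1 + w) ^ 2 / w))) =
      (1 + (x : ℂ)) ^ (r + 1) / (1 - x) := by
  have hR : 0 < R := hx.trans_lt hxR
  have hnorm : ‖(x : ℂ)‖ = x := Complex.norm_of_nonneg hx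
  have hx1 : 1 + (x : ℂ) ≠ 0 := Complex.slitPlane_ne_zero
    (Complex.mem_slitPlane_of_norm_lt_one (by linarith))
  have hpole {w : ℂ} (hw : ‖w‖ ≤ R) : 1 - x * w ≠ 0 :=
    one_sub_mul_ne_zero_of_norm_lt_one (hnorm.trans_lt (hxR.trans hR1)) (hw.trans hR1.le)
  have hdiff : DifferentiableOn ℂ (fun w : ℂ => (1 + w) ^ r * (1 + x) ^ 2 / (1 - x * w))
      (Metric.closedBall 0 R) :=
    (((differentiableOn_one_add_cpow r).mono
      (Metric.closedBall_subset_ball hR1)).mul_const _).fun_div (by fun_prop)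
        fun w hw => hpole (mem_closedBall_zero_iff.1 hw)
  have hcauchy := (hdiff.diffContOnCl_ball
    subset_rfl).two_pi_i_inv_smul_circleIntegral_sub_inv_smul (w := (x : ℂ))
      (by rwa [mem_ball_zero_iff, hnorm])
  have hvalue :
      (1 + (x : ℂ)) ^ r * (1 + x) ^ 2 / (1 - x * x) = (1 + (x : ℂ)) ^ (r + 1) / (1 - x) := by
    have := hpole (hnorm.trans_le hxR.le)
    have hx2 : 1 - (x : ℂ) ≠ 0 := by
      rw [sub_ne_zero]
      exact_mod_cast (hxR.trans hR1).ne'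
    rw [Complex.cpow_add _ _ hx1, Complex.cpow_one, div_eq_div_iff this hx2]
    ring
  rw [← hvalue, ← hcauchy]
  congr 1
  refine circleIntegral.integral_congr hR.le fun w hw => ?_
  have hw : ‖w‖ = R := mem_sphere_zero_iff_norm.1 hw
  have hw0 : w ≠ 0 := norm_pos_iff.1 (hw ▸ hR)
  have hwx : w - x ≠ 0 := fun h => by
    rw [sub_eq_zero.1 h, hnorm] at hw
    exact hxR.ne hw
  have := hpole hw.le
  simp only [one_sub_div_one_add_sq_mul hx1 hw0, smul_eq_mul]
  field_simp

lemma hasSum_ringChoose_add_two_mul_mul_pow (r : ℂ) {x : ℝ} (hx0 : 0 ≤ x) (hx1 : x < 1) :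
    HasSum (fun m : ℕ => Ring.choose (r + 2 * m) m * ((x : ℂ) / (1 + x) ^ 2) ^ m)
      ((1 + (x : ℂ)) ^ (r + 1) / (1 - x)) := by
  obtain ⟨R, hxR, hR1⟩ := exists_between hx1
  have hR : 0 < R := hx0.trans_lt hxR
  have hw0 {w : ℂ} (hw : w ∈ Metric.sphere 0 R) : w ≠ 0 := Metric.ne_of_mem_sphere hw hR.ne'
  have hcpow : ContinuousOn (fun w : ℂ => (1 + w) ^ r) (Metric.sphere 0 R) :=
    (differentiableOn_one_add_cpow r).continuousOn.mono
      (Metric.sphere_subset_closedBall.trans (Metric.closedBall_subset_ball hR1))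
  have hratio : ∀ w ∈ Metric.sphere (0 : ℂ) R,
      ‖(x : ℂ) / (1 + x) ^ 2 * ((1 + w) ^ 2 / w)‖ < 1 := fun w hw => by
    rw [← mem_sphere_zero_iff_norm.1 hw] at hxR hR1
    exact norm_div_one_add_sq_mul_lt_one hx0 hxR hR1
  rw [← two_pi_I_inv_smul_circleIntegral_div_one_sub r hx0 hxR hR1]
  simp only [← two_pi_I_inv_smul_circleIntegral_pow_mul r _ _ hR hR1]
  exact (hasSum_circleIntegral_pow_mul hR.le (by fun_prop (disch := exact hw0))
    (hcpow.div continuousOn_id fun w => hw0) hratio).const_smul _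

lemma ordinaryHypergeometricCoefficient_add_half_eq_ringChoose {b : ℝ} (hb : ∀ k : ℕ, 2 * b ≠ -k)
    (n : ℕ) :
    ordinaryHypergeometricCoefficient (b + 1 / 2) b (2 * b) n * 4 ^ n =
      Ring.choose (2 * b - 1 + 2 * n) n := by
  have hne := rpoch_ne_zero hb n
  have hdouble : rpoch (2 * b) n * rpoch (2 * b + n) n =
      4 ^ n * rpoch b n * rpoch (b + 1 / 2) n := by
    rw [← rpoch_add, ← two_mul, rpoch_two_mul]
  rw [show 2 * b - 1 + 2 * n = 2 * b + n + n - 1 by ring, ringChoose_add_sub_one_eq_rpoch_div,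
    ordinaryHypergeometricCoefficient_eq_rpoch]
  rw [div_mul_eq_mul_div, div_eq_div_iff (by positivity) (by positivity)]
  linear_combination -(n.factorial : ℝ) * hdouble

theorem ordinaryHypergeometric_add_half_four_mul_div_sq {b : ℝ} (hb : ∀ k : ℕ, 2 * b ≠ -k) {x : ℝ}
    (hx0 : 0 ≤ x) (hx1 : x < 1) :
    ₂F₁ (b + 1 / 2) b (2 * b) (4 * x / (1 + x) ^ 2) = (1 + x) ^ (2 * b) / (1 - x) := by
  have harg : |4 * x / (1 + x) ^ 2| < 1 := by
    rw [abs_of_nonneg (by positivity), div_lt_one (by positivity)]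
    linarith [sq_pos_of_pos (sub_pos.2 hx1)]
  refine (hasSum_ordinaryHypergeometric _ _ _ harg).unique ?_
  rw [← Complex.hasSum_ofReal]
  convert! hasSum_ringChoose_add_two_mul_mul_pow (2 * b - 1 : ℝ) hx0 hx1 using 1
  · ext n
    rw [mul_div_assoc, mul_pow, ← mul_assoc,
      ordinaryHypergeometricCoefficient_add_half_eq_ringChoose hb]
    push_cast [Complex.ofReal_choose]
    rfl
  · push_cast [Complex.ofReal_cpow (by positivity : 0 ≤ 1 + x)]
    ring_nf

end QuadraticTransformation

section BaseChange

open ProbabilityTheory (beta)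

/-- The reciprocal `1 / u` of the degree-two base change `u = (1 + x)² / (4x)` inverted by `zOf`.
It is used in place of `u` because it is the argument of the quadratic transformation. -/
noncomputable def invBaseChange (x : ℝ) : ℝ := 4 * x / (1 + x) ^ 2

lemma zOf_mem_Ioo {u : ℝ} (hu : 1 < u) : zOf u ∈ Set.Ioo 0 1 := by
  have hlower : u - 1 < √(u ^ 2 - u) := Real.lt_sqrt_of_sq_lt (by linarith)
  have hupper : √(u ^ 2 - u) < u - 1 / 2 := (Real.sqrt_lt' (by linarith)).2 (by linarith)
  constructor <;> unfold zOf <;> linarith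

lemma one_add_zOf_sq {u : ℝ} (hu : 1 < u) : (1 + zOf u) ^ 2 = 4 * u * zOf u := by
  have hsqrt := Real.sq_sqrt (show 0 ≤ u ^ 2 - u by nlinarith)
  unfold zOf
  linear_combination 4 * hsqrt

lemma invBaseChange_zOf {u : ℝ} (hu : 1 < u) : invBaseChange (zOf u) = u⁻¹ := by
  have := (zOf_mem_Ioo hu).1
  rw [invBaseChange, one_add_zOf_sq hu]
  field_simp

lemma hasDerivAt_invBaseChange {x : ℝ} (hx : 1 + x ≠ 0) :
    HasDerivAt invBaseChange (4 * (1 - x) / (1 + x) ^ 3) x := by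
  have hderiv := ((hasDerivAt_id x).const_mul 4).div (((hasDerivAt_id x).const_add 1).pow 2)
    (pow_ne_zero 2 hx)
  convert! hderiv using 1
  simp only [id, Pi.pow_apply]
  field_simp
  ring

lemma strictMonoOn_invBaseChange : StrictMonoOn invBaseChange (Set.Icc 0 1) := by
  have hne {x : ℝ} (hx : x ∈ Set.Icc 0 1) : 1 + x ≠ 0 := by linarith [hx.1]
  refine strictMonoOn_of_deriv_pos (convex_Icc 0 1)
    (fun x hx => (hasDerivAt_invBaseChange (hne hx)).continuousAt.continuousWithinAt)
    fun x hx => ?_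
  rw [(hasDerivAt_invBaseChange (hne (interior_subset hx))).deriv]
  rw [interior_Icc] at hx
  have := hx.1
  have := sub_pos.2 hx.2
  positivity

lemma image_const_mul_invBaseChange {u : ℝ} (hu : 1 < u) :
    (fun x => u * invBaseChange x) '' Set.Ioo 0 (zOf u) = Set.Ioo 0 1 := by
  have hu0 : 0 < u := by linarith
  obtain ⟨hz0, hz1⟩ := zOf_mem_Ioo hu
  have hsub : Set.Icc 0 (zOf u) ⊆ Set.Icc 0 1 := Set.Icc_subset_Icc_right hz1.le
  have hmono : StrictMonoOn (fun x => u * invBaseChange x) (Set.Icc 0 (zOf u)) :=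
    fun x hx y hy hxy =>
      mul_lt_mul_of_pos_left (strictMonoOn_invBaseChange (hsub hx) (hsub hy) hxy) hu0
  have hcont : ContinuousOn (fun x => u * invBaseChange x) (Set.Icc 0 (zOf u)) := fun x hx =>
    ((hasDerivAt_invBaseChange (by linarith [hx.1])).continuousAt.const_mul u).continuousWithinAt
  have hleft : u * invBaseChange 0 = 0 := by simp [invBaseChange]
  have hright : u * invBaseChange (zOf u) = 1 := by
    rw [invBaseChange_zOf hu, mul_inv_cancel₀ hu0.ne']
  have hmaps := hmono.mapsTo_Ioo
  have hsurj := intermediate_value_Ioo hz0.le hcont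
  simp only [hleft, hright] at hmaps hsurj
  exact hmaps.image_subset.antisymm hsurj

lemma one_sub_const_mul_invBaseChange (u : ℝ) {x : ℝ} (hx : 1 + x ≠ 0) :
    1 - u * invBaseChange x = (x ^ 2 + 2 * (1 - 2 * u) * x + 1) / (1 + x) ^ 2 := by
  unfold invBaseChange
  field_simp
  ring

lemma quadratic_pos_of_mem_Ioo_zOf {u x : ℝ} (hu : 1 < u) (hx : x ∈ Set.Ioo 0 (zOf u)) :
    0 < x ^ 2 + 2 * (1 - 2 * u) * x + 1 := by
  have hx0 := hx.1
  have himage : u * invBaseChange x ∈ Set.Ioo 0 1 :=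
    image_const_mul_invBaseChange hu ▸ Set.mem_image_of_mem _ hx
  have hpos := sub_pos.2 himage.2
  rw [one_sub_const_mul_invBaseChange u (by positivity)] at hpos
  exact (div_pos_iff_of_pos_right (by positivity)).1 hpos

lemma integral_rpow_mul_one_sub_rpow_mul_comp_invBaseChange (a b : ℝ) {u : ℝ} (hu : 1 < u)
    (f : ℝ → ℝ) :
    ∫ t in Set.Ioo (0 : ℝ) 1, t ^ (a - 1) * (1 - t) ^ (b - 1) * f t =
      (4 * u) ^ a * ∫ x in Set.Ioo 0 (zOf u),
        x ^ (a - 1) * (x ^ 2 + 2 * (1 - 2 * u) * x + 1) ^ (b - 1) *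
          ((1 - x) / (1 + x) ^ (2 * (a + b) - 1) * f (u * invBaseChange x)) := by
  have hu0 : 0 < u := by linarith
  obtain ⟨hz0, hz1⟩ := zOf_mem_Ioo hu
  have hderiv (x : ℝ) (hx : x ∈ Set.Ioo 0 (zOf u)) := ((hasDerivAt_invBaseChange
    (by linarith [hx.1] : 1 + x ≠ 0)).const_mul u).hasDerivWithinAt (s := Set.Ioo 0 (zOf u))
  have hmono : MonotoneOn (fun x => u * invBaseChange x) (Set.Ioo 0 (zOf u)) :=
    fun x hx y hy hxy => mul_le_mul_of_nonneg_left (strictMonoOn_invBaseChange.monotoneOn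
      ⟨hx.1.le, (hx.2.trans hz1).le⟩ ⟨hy.1.le, (hy.2.trans hz1).le⟩ hxy) hu0.le
  rw [← image_const_mul_invBaseChange hu, integral_image_eq_integral_deriv_smul_of_monotoneOn
    measurableSet_Ioo hderiv hmono, ← integral_const_mul]
  refine setIntegral_congr_fun measurableSet_Ioo fun x hx => ?_
  have hx0 := hx.1
  have hx1 : 0 < 1 + x := by positivity
  have hQ := quadratic_pos_of_mem_Ioo_zOf hu hx
  have hpow : (1 + x) ^ (2 * (a + b) - 1) =
      ((1 + x) ^ 2) ^ (a - 1) * ((1 + x) ^ 2) ^ (b - 1) * (1 + x) ^ 3 := by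
    simp only [← Real.rpow_natCast, ← Real.rpow_mul hx1.le, ← Real.rpow_add hx1]
    congr 1
    push_cast
    ring
  have hua : (4 * u) ^ a = (4 * u) ^ (a - 1) * (4 * u) := by
    rw [← Real.rpow_add_one (by positivity), sub_add_cancel]
  have hbase : u * invBaseChange x = 4 * u * x / (1 + x) ^ 2 := by
    unfold invBaseChange
    ring
  have hbase_rpow : (u * invBaseChange x) ^ (a - 1) =
      (4 * u) ^ (a - 1) * x ^ (a - 1) / ((1 + x) ^ 2) ^ (a - 1) := by
    rw [hbase, Real.div_rpow (by positivity) (by positivity),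
      Real.mul_rpow (by positivity) hx0.le]
  simp only [smul_eq_mul]
  rw [hbase_rpow, one_sub_const_mul_invBaseChange u hx1.ne',
    Real.div_rpow hQ.le (by positivity), hpow, hua]
  field_simp

theorem integral_Ioo_zOf_rpow_mul_quadratic_rpow {a b β u : ℝ} (ha : 0 < a) (hb : 0 < b)
    (hab : a + b = β + 1 / 2) (hβ : β ≠ 0) (hu : 1 < u) :
    ∫ x in Set.Ioo 0 (zOf u), x ^ (a - 1) * (x ^ 2 + 2 * (1 - 2 * u) * x + 1) ^ (b - 1) =
      beta a b * 4 ^ (-a) * (u ^ (-a) * ₂F₁ a β (2 * β) u⁻¹) := by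
  have hu0 : 0 < u := by linarith
  have h2β (k : ℕ) : 2 * β ≠ -k := by
    rcases k with _ | k
    · simpa using hβ
    · push_cast
      linarith [k.cast_nonneg (α := ℝ)]
  have hbateman := integral_rpow_mul_one_sub_rpow_mul_ordinaryHypergeometric ha hb β (2 * β)
    (x := u⁻¹) (by rw [abs_of_pos (by positivity)]; exact inv_lt_one_of_one_lt₀ hu)
  have hintegrand : ∀ x ∈ Set.Ioo 0 (zOf u),
      (1 - x) / (1 + x) ^ (2 * (a + b) - 1) *
        ₂F₁ (a + b) β (2 * β) (u⁻¹ * (u * invBaseChange x)) = 1 := by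
    intro x hx
    have hx0 := hx.1
    have hx1 := hx.2.trans (zOf_mem_Ioo hu).2
    have := (sub_pos.2 hx1).ne'
    rw [inv_mul_cancel_left₀ hu0.ne', invBaseChange, hab,
      ordinaryHypergeometric_add_half_four_mul_div_sq h2β hx0.le hx1,
      show 2 * (β + 1 / 2) - 1 = 2 * β by ring]
    field_simp
  rw [integral_rpow_mul_one_sub_rpow_mul_comp_invBaseChange a b hu,
    setIntegral_congr_fun (g := fun x => x ^ (a - 1) * (x ^ 2 + 2 * (1 - 2 * u) * x + 1) ^ (b - 1))
      measurableSet_Ioo fun x hx => by simp only [hintegrand x hx, mul_one]] at hbateman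
  have hcancel : 4 ^ (-a) * u ^ (-a) * (4 * u) ^ a = 1 := by
    rw [← Real.mul_rpow (by norm_num) hu0.le, ← Real.rpow_add (by positivity), neg_add_cancel,
      Real.rpow_zero]
  linear_combination 4 ^ (-a) * u ^ (-a) * hbateman - (∫ x in Set.Ioo 0 (zOf u),
    x ^ (a - 1) * (x ^ 2 + 2 * (1 - 2 * u) * x + 1) ^ (b - 1)) * hcancel

end BaseChange

theorem statement19_general (β₁ β₂ a b α A B : ℝ) (hβ₁ : β₁ ≠ 0) (hβ₂ : β₂ < 1) (ha : 0 < a)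
    (hb : 0 < b) (hβ : 1 / 2 < β₁ + β₂) (hα : α = β₁ + β₂ - 1 / 2) (hB : 1 < B) (hAB : B < A) :
    ∫ u in Set.Ioo B A,
        (A - u) ^ (a - 1) * (u - B) ^ (b - 1) *
        ∫ x in Set.Ioo 0 (zOf u),
          x ^ (β₁ + β₂ - 3 / 2) * (x ^ 2 + 2 * (1 - 2 * u) * x + 1) ^ (-β₂) =
      Real.Gamma α * Real.Gamma (1 - β₂) * (Real.Gamma a * Real.Gamma b) /
        ((4 : ℝ) ^ α * Real.Gamma (β₁ + 1 / 2) * Real.Gamma (a + b)) *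
      (A ^ (-α) * (A - B) ^ (a + b - 1)) *
      appellF2 α β₁ a (2 * β₁) (a + b) (1 / A) (1 - B / A) := by
  have hα0 : 0 < α := by linarith
  have hα_add : α + (1 - β₂) = β₁ + 1 / 2 := by linarith
  have hinner {u : ℝ} (hu : u ∈ Set.Ioo B A) :=
    integral_Ioo_zOf_rpow_mul_quadratic_rpow hα0 (sub_pos.2 hβ₂) hα_add hβ₁ (hB.trans hu.1)
  simp only [show α - 1 = β₁ + β₂ - 3 / 2 by linarith, sub_sub_cancel_left] at hinner
  rw [setIntegral_congr_fun measurableSet_Ioo fun u hu => by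
      rw [hinner hu, mul_left_comm], integral_const_mul,
    integral_Ioo_sub_rpow_mul_sub_rpow_mul_ordinaryHypergeometric_inv ha hb α β₁ (2 * β₁) hB hAB,
    ProbabilityTheory.beta, ProbabilityTheory.beta, hα_add, Real.rpow_neg zero_le_four, one_div A]
  ring

/-- The period of the holomorphic two-form over the transcendental two-cycle,
expressed through Appell's hypergeometric function `F₂`. -/
theorem statement19 (β₁ β₂ α A B : ℝ)
    (hβ₁ : 0 < β₁) (hβ₂0 : 0 < β₂) (hβ₂1 : β₂ < 1) (hβ : 1 / 2 < β₁ + β₂)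
    (hα : α = β₁ + β₂ - 1 / 2) (hB : 1 < B) (hAB : B < A) :
    ∫ u in Set.Ioo B A,
        (A - u) ^ (β₂ - 1) * (u - B) ^ (β₂ - 1) *
        ∫ x in Set.Ioo 0 (zOf u),
          x ^ (β₁ + β₂ - 3 / 2) * (x ^ 2 + 2 * (1 - 2 * u) * x + 1) ^ (-β₂) =
      Real.Gamma α * Real.Gamma (1 - β₂) * Real.Gamma β₂ ^ (2 : ℕ) /
        ((4 : ℝ) ^ α * Real.Gamma (β₁ + 1 / 2) * Real.Gamma (2 * β₂)) *
      (A ^ (-α) * (A - B) ^ (2 * β₂ - 1)) *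
      appellF2 α β₁ β₂ (2 * β₁) (2 * β₂) (1 / A) (1 - B / A) := by
  simpa only [← two_mul, ← sq] using
    statement19_general β₁ β₂ β₂ β₂ α A B hβ₁.ne' hβ₂1 hβ₂0 hβ₂0 hβ hα hB hAB
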